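/- Let k be a field of characteristic different from 2, and let A = k[u, v]/(u², v²) be the quotient of the commutative polynomial ring in two variables by the ideal generated by u² and v². The set of 3×3 matrices of the form [[a, d, e], [c, b, f], [0, 0, ab + cd]] with a, b, c, d, e, f ∈ k satisfying ad = 0, cb = 0 and a²b² ≠ c²d² is a subgroup of GL₃(k), and the group of k-algebra automorphisms of A is isomorphic, as a group, to this subgroup. -/

import Mathlib

/-!
Over a reduced ring `R`, any `R`-algebra endomorphism `φ` of `A = R[u, v]/(u², v²)` preserves the
augmentation `A → R`, because `φ u` and `φ v` square to zero and so have nilpotent constant term.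
Hence `φ` is determined by the `3 × 3` matrix of its action on `A / R` in the basis `u, v, uv`, and
it is bijective as soon as this matrix is invertible. If `φ u = a u + d v + e uv` and
`φ v = c u + b v + f uv`, then `φ (uv) = (ab + cd) uv`, while `(φ u)² = 0 = (φ v)²` says
`2ad = 0 = 2cb`. Conversely `A` is the universal commutative algebra on two elements of square zero,
so all such matrices occur; their determinant is `(ab - cd)(ab + cd)`.
-/

open scoped DualNumber nonZeroDivisors

/-- The ring `R[ε][ε]`, our model of `R[u, v]/(u², v²)` with `u` the inner and `v` the outer `ε`. -/
abbrev IteratedDualNumber (R : Type*) : Type _ := R[ε][ε]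

namespace IteratedDualNumber

variable {R : Type*} [CommRing R]

/-- The generator `u` of `R[u, v]/(u², v²)`. -/
def u : IteratedDualNumber R := TrivSqZeroExt.inl ε

/-- The generator `v` of `R[u, v]/(u², v²)`. -/
def v : IteratedDualNumber R := ε

/-- The constant coefficient, as an algebra morphism. -/
def augmentation : IteratedDualNumber R →ₐ[R] R :=
  (TrivSqZeroExt.fstHom R R R).comp (TrivSqZeroExt.fstHom R R[ε] R[ε])

/-- The coefficients of `u`, `v` and `u * v`. The kernel is `R`, so this identifies the quotient
module `R[ε][ε] / R` with `R³`. -/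
def coord : IteratedDualNumber R →ₗ[R] Fin 3 → R where
  toFun x := ![x.fst.snd, x.snd.fst, x.snd.snd]
  map_add' x y := by simp
  map_smul' r x := by simp

theorem augmentation_apply (x : IteratedDualNumber R) : augmentation x = x.fst.fst := rfl

theorem coord_apply (x : IteratedDualNumber R) :
    coord x = ![x.fst.snd, x.snd.fst, x.snd.snd] := rfl

theorem ext_coord {x y : IteratedDualNumber R} (haug : augmentation x = augmentation y)
    (hcoord : coord x = coord y) : x = y :=
  TrivSqZeroExt.ext (TrivSqZeroExt.ext haug (congrFun hcoord 0))
    (TrivSqZeroExt.ext (congrFun hcoord 1) (congrFun hcoord 2))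

theorem coord_mul (x y : IteratedDualNumber R) :
    coord (x * y) = augmentation x • coord y + augmentation y • coord x +
      ![0, 0, coord x 0 * coord y 1 + coord x 1 * coord y 0] := by
  ext i
  fin_cases i <;> simp [coord_apply, augmentation_apply] <;> ring

@[simp] theorem coord_algebraMap (r : R) : coord (algebraMap R (IteratedDualNumber R) r) = 0 := by
  ext i
  fin_cases i <;> simp [coord_apply, TrivSqZeroExt.algebraMap_eq_inl']

@[simp] theorem augmentation_u : augmentation (u : IteratedDualNumber R) = 0 := rfl

@[simp] theorem augmentation_v : augmentation (v : IteratedDualNumber R) = 0 := rfl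

@[simp] theorem coord_u : coord (u : IteratedDualNumber R) = ![1, 0, 0] := rfl

@[simp] theorem coord_v : coord (v : IteratedDualNumber R) = ![0, 1, 0] := rfl

@[simp] theorem coord_u_mul_v : coord (u * v : IteratedDualNumber R) = ![0, 0, 1] := by
  simp [coord_mul]

theorem u_mul_self : (u * u : IteratedDualNumber R) = 0 :=
  ext_coord (by simp) (by simp [coord_mul])

theorem v_mul_self : (v * v : IteratedDualNumber R) = 0 :=
  ext_coord (by simp) (by simp [coord_mul])

theorem eq_algebraMap_add_smul (x : IteratedDualNumber R) :
    x = algebraMap R _ (augmentation x) +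
      (coord x 0 • u + coord x 1 • v + coord x 2 • (u * v)) := by
  refine ext_coord (by simp) ?_
  ext i
  fin_cases i <;> simp

section UniversalProperty

theorem algHom_ext_uv {B : Type*} [Semiring B] [Algebra R B]
    {f g : IteratedDualNumber R →ₐ[R] B} (hu : f u = g u) (hv : f v = g v) : f = g := by
  refine AlgHom.ext fun x => ?_
  rw [eq_algebraMap_add_smul x]
  simp only [map_add, map_smul, map_mul, AlgHom.commutes, hu, hv]

variable {B : Type*} [CommSemiring B] [Algebra R B]

/-- The algebra morphism out of `R[ε][ε]` sending `u` and `v` to given elements of square zero. -/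
def lift (x y : B) (hx : x * x = 0) (hy : y * y = 0) : IteratedDualNumber R →ₐ[R] B :=
  DualNumber.lift ⟨(DualNumber.lift ⟨(Algebra.ofId R B, x), hx, fun _ => Commute.all _ _⟩, y),
    hy, fun _ => Commute.all _ _⟩

@[simp] theorem lift_u (x y : B) (hx : x * x = 0) (hy : y * y = 0) :
    lift (R := R) x y hx hy u = x := by
  simp [lift, u]

@[simp] theorem lift_v (x y : B) (hx : x * x = 0) (hy : y * y = 0) :
    lift (R := R) x y hx hy v = y := by
  simp [lift, v]

end UniversalProperty

section RowMatrix

/-- The matrix of the action of `f` on `R[ε][ε] / R` in the basis `u, v, u * v`. Images of basis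
vectors are rows, so that `rowMatrix` reverses composition. -/
def rowMatrix (f : IteratedDualNumber R →ₐ[R] IteratedDualNumber R) : Matrix (Fin 3) (Fin 3) R :=
  Matrix.of ![coord (f u), coord (f v), coord (f (u * v))]

theorem coord_map (f : IteratedDualNumber R →ₐ[R] IteratedDualNumber R)
    (x : IteratedDualNumber R) : coord (f x) = Matrix.vecMul (coord x) (rowMatrix f) := by
  conv_lhs => rw [eq_algebraMap_add_smul x]
  simp only [map_add, map_smul, AlgHom.commutes, coord_algebraMap, zero_add]
  ext j
  simp [rowMatrix, Matrix.vecMul, dotProduct, Fin.sum_univ_three]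

theorem rowMatrix_comp (f g : IteratedDualNumber R →ₐ[R] IteratedDualNumber R) :
    rowMatrix (f.comp g) = rowMatrix g * rowMatrix f := by
  ext i j
  rw [Matrix.mul_apply_eq_vecMul]
  fin_cases i <;> exact congrFun (coord_map f _) j

theorem rowMatrix_id : rowMatrix (AlgHom.id R (IteratedDualNumber R)) = 1 := by
  ext i j
  fin_cases i <;> fin_cases j <;> simp [rowMatrix]

theorem exists_rowMatrix_eq {a b c d : R} (e f : R) (had : a * d = 0) (hcb : c * b = 0) :
    ∃ φ : IteratedDualNumber R →ₐ[R] IteratedDualNumber R,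
      rowMatrix φ = !![a, d, e; c, b, f; 0, 0, a * b + c * d] := by
  have sq_eq_zero {p q : R} (r : R) (hpq : p * q = 0) :
      (p • u + q • v + r • (u * v) : IteratedDualNumber R) * (p • u + q • v + r • (u * v)) = 0 :=
    ext_coord (by simp) (by simp [coord_mul, mul_comm q, hpq])
  refine ⟨lift (B := IteratedDualNumber R) _ _ (sq_eq_zero e had) (sq_eq_zero f hcb), ?_⟩
  ext i j
  fin_cases i <;> fin_cases j <;> simp [rowMatrix, coord_mul, mul_comm]

/-- The representation of the automorphism group of `R[ε][ε]` on `R[ε][ε] / R`. The inverse makes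
up for `rowMatrix` reversing composition. -/
def autRep : (IteratedDualNumber R ≃ₐ[R] IteratedDualNumber R) →*
    Matrix.GeneralLinearGroup (Fin 3) R :=
  MonoidHom.toHomUnits
    { toFun := fun φ => rowMatrix φ⁻¹.toAlgHom
      map_one' := rowMatrix_id
      map_mul' := fun φ ψ => rowMatrix_comp ψ⁻¹.toAlgHom φ⁻¹.toAlgHom }

theorem coe_autRep (φ : IteratedDualNumber R ≃ₐ[R] IteratedDualNumber R) :
    (autRep φ : Matrix (Fin 3) (Fin 3) R) = rowMatrix φ⁻¹.toAlgHom := rfl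

end RowMatrix

section Reduced

variable [IsReduced R]

theorem augmentation_eq_zero_of_mul_self_eq_zero {x : IteratedDualNumber R} (hx : x * x = 0) :
    augmentation x = 0 :=
  eq_zero_of_pow_eq_zero (n := 2) (by rw [pow_two, ← map_mul, hx, map_zero])

theorem augmentation_map (f : IteratedDualNumber R →ₐ[R] IteratedDualNumber R)
    (x : IteratedDualNumber R) : augmentation (f x) = augmentation x := by
  have map_eq_zero {y : IteratedDualNumber R} (hy : y * y = 0) : augmentation (f y) = 0 :=
    augmentation_eq_zero_of_mul_self_eq_zero (by rw [← map_mul, hy, map_zero])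
  have hcomp : augmentation.comp f = augmentation :=
    algHom_ext_uv (map_eq_zero u_mul_self) (map_eq_zero v_mul_self)
  exact DFunLike.congr_fun hcomp x

theorem rowMatrix_injective :
    Function.Injective (rowMatrix (R := R)) := fun f g h =>
  AlgHom.ext fun x => ext_coord (by simp only [augmentation_map]) (by simp only [coord_map, h])

theorem autRep_injective : Function.Injective (autRep (R := R)) := fun _ _ h =>
  inv_injective (AlgEquiv.coe_toAlgHom_injective (rowMatrix_injective (congrArg Units.val h)))

theorem bijective_of_isUnit_rowMatrix {f : IteratedDualNumber R →ₐ[R] IteratedDualNumber R}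
    (hf : IsUnit (rowMatrix f)) : Function.Bijective f := by
  constructor
  · intro x y hxy
    refine ext_coord ?_ (Matrix.vecMul_injective_of_isUnit hf ?_)
    · rw [← augmentation_map f, hxy, augmentation_map]
    · simp only [← coord_map, hxy]
  · intro y
    obtain ⟨w, hw⟩ := Matrix.vecMul_surjective_iff_isUnit.mpr hf (coord y)
    let x : IteratedDualNumber R :=
      algebraMap R _ (augmentation y) + (w 0 • u + w 1 • v + w 2 • (u * v))
    have hx : coord x = w := by
      ext i
      fin_cases i <;> simp [x]
    exact ⟨x, ext_coord (by simp [augmentation_map, x]) (by rw [coord_map, hx, ← hw])⟩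

theorem mem_range_autRep_iff_exists_rowMatrix_eq {M : Matrix.GeneralLinearGroup (Fin 3) R} :
    M ∈ (autRep (R := R)).range ↔
      ∃ f : IteratedDualNumber R →ₐ[R] IteratedDualNumber R, rowMatrix f = M := by
  constructor
  · rintro ⟨φ, rfl⟩
    exact ⟨_, (coe_autRep φ).symm⟩
  · rintro ⟨f, hf⟩
    let φ := AlgEquiv.ofBijective f (bijective_of_isUnit_rowMatrix (hf ▸ M.isUnit))
    exact ⟨φ⁻¹, Units.ext (by rw [coe_autRep, inv_inv, ← hf]; rfl)⟩

theorem coord_map_mul (f : IteratedDualNumber R →ₐ[R] IteratedDualNumber R)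
    {x y : IteratedDualNumber R} (hx : augmentation x = 0) (hy : augmentation y = 0) :
    coord (f (x * y)) =
      ![0, 0, coord (f x) 0 * coord (f y) 1 + coord (f x) 1 * coord (f y) 0] := by
  simp [coord_mul, augmentation_map, hx, hy]

theorem coord_zero_mul_coord_one_eq_zero (h2 : (2 : R) ∈ R⁰) {x : IteratedDualNumber R}
    (hx : x * x = 0) : coord x 0 * coord x 1 = 0 := by
  have h := congrFun (coord_mul x x) 2
  simp only [hx, augmentation_eq_zero_of_mul_self_eq_zero hx, map_zero, zero_smul, zero_add,
    Pi.zero_apply, Matrix.cons_val] at h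
  exact (mul_left_mem_nonZeroDivisors_eq_zero_iff h2).mp (by linear_combination -h)

theorem exists_rowMatrix_eq_iff (h2 : (2 : R) ∈ R⁰) {M : Matrix (Fin 3) (Fin 3) R} :
    (∃ f : IteratedDualNumber R →ₐ[R] IteratedDualNumber R, rowMatrix f = M) ↔
      ∃ a b c d e f : R, a * d = 0 ∧ c * b = 0 ∧
        M = !![a, d, e; c, b, f; 0, 0, a * b + c * d] := by
  constructor
  · rintro ⟨f, rfl⟩
    have hu : f u * f u = 0 := by rw [← map_mul, u_mul_self, map_zero]
    have hv : f v * f v = 0 := by rw [← map_mul, v_mul_self, map_zero]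
    refine ⟨_, _, _, _, coord (f u) 2, coord (f v) 2, coord_zero_mul_coord_one_eq_zero h2 hu,
      coord_zero_mul_coord_one_eq_zero h2 hv, ?_⟩
    rw [rowMatrix, coord_map_mul f augmentation_u augmentation_v]
    ext i j
    fin_cases i <;> fin_cases j <;> simp [mul_comm]
  · rintro ⟨a, b, c, d, e, f, had, hcb, rfl⟩
    exact exists_rowMatrix_eq e f had hcb

theorem mem_range_autRep_iff (h2 : (2 : R) ∈ R⁰) (M : Matrix.GeneralLinearGroup (Fin 3) R) :
    M ∈ (autRep (R := R)).range ↔ ∃ a b c d e f : R,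
      a * d = 0 ∧ c * b = 0 ∧ IsUnit (a ^ 2 * b ^ 2 - c ^ 2 * d ^ 2) ∧
      (M : Matrix (Fin 3) (Fin 3) R) = !![a, d, e; c, b, f; 0, 0, a * b + c * d] := by
  rw [mem_range_autRep_iff_exists_rowMatrix_eq, exists_rowMatrix_eq_iff h2]
  constructor
  · rintro ⟨a, b, c, d, e, f, had, hcb, hM⟩
    have hdet : (M : Matrix (Fin 3) (Fin 3) R).det = a ^ 2 * b ^ 2 - c ^ 2 * d ^ 2 := by
      simp only [hM, Matrix.det_fin_three, Matrix.of_apply, Matrix.cons_val]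
      ring
    exact ⟨a, b, c, d, e, f, had, hcb, hdet ▸ M.isUnit.map Matrix.detMonoidHom, hM⟩
  · rintro ⟨a, b, c, d, e, f, had, hcb, -, hM⟩
    exact ⟨a, b, c, d, e, f, had, hcb, hM⟩

end Reduced

section Presentation

open MvPolynomial

variable (R) in
/-- The ideal `(u², v²)` of `R[u, v]`. -/
noncomputable abbrev squaresIdeal : Ideal (MvPolynomial (Fin 2) R) :=
  Ideal.span {(X 0 : MvPolynomial (Fin 2) R) ^ 2, (X 1 : MvPolynomial (Fin 2) R) ^ 2}

theorem mk_X_mul_self (i : Fin 2) :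
    Ideal.Quotient.mk (squaresIdeal R) (X i) * Ideal.Quotient.mk (squaresIdeal R) (X i) = 0 := by
  rw [← map_mul, ← pow_two, Ideal.Quotient.eq_zero_iff_mem]
  exact Ideal.subset_span (by fin_cases i <;> simp)

theorem squaresIdeal_le_ker_aeval :
    squaresIdeal R ≤ RingHom.ker (aeval (R := R) ![(u : IteratedDualNumber R), v]) := by
  rw [Ideal.span_le]
  rintro _ (rfl | rfl) <;> simp [RingHom.mem_ker, pow_two, u_mul_self, v_mul_self]

variable (R) in
/-- The evaluation morphism from `R[u, v]/(u², v²)` to its model `R[ε][ε]`. -/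
noncomputable def quotientHom :
    (MvPolynomial (Fin 2) R ⧸ squaresIdeal R) →ₐ[R] IteratedDualNumber R :=
  Ideal.Quotient.liftₐ _ (aeval ![(u : IteratedDualNumber R), v]) squaresIdeal_le_ker_aeval

theorem quotientHom_mk_X (i : Fin 2) :
    quotientHom R (Ideal.Quotient.mk _ (X i)) = ![u, v] i :=
  aeval_X _ i

variable (R) in
/-- The identification of `R[u, v]/(u², v²)` with its model `R[ε][ε]`. -/
noncomputable def quotientEquiv :
    (MvPolynomial (Fin 2) R ⧸ squaresIdeal R) ≃ₐ[R] IteratedDualNumber R :=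
  AlgEquiv.ofAlgHom (quotientHom R) (lift _ _ (mk_X_mul_self 0) (mk_X_mul_self 1))
    (by apply algHom_ext_uv <;> simp [quotientHom_mk_X])
    (by
      refine Ideal.Quotient.algHom_ext R (MvPolynomial.algHom_ext fun i => ?_)
      fin_cases i <;> simp [quotientHom_mk_X])

end Presentation

end IteratedDualNumber

open IteratedDualNumber in
theorem aut_kuv_quot_iso_subgroup_general (R : Type*) [CommRing R] [IsReduced R]
    (h2 : (2 : R) ∈ R⁰) :
    ∃ G : Subgroup (Matrix.GeneralLinearGroup (Fin 3) R),
      (∀ M : Matrix.GeneralLinearGroup (Fin 3) R, M ∈ G ↔ ∃ a b c d e f : R,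
        a * d = 0 ∧ c * b = 0 ∧ IsUnit (a ^ 2 * b ^ 2 - c ^ 2 * d ^ 2) ∧
        (M : Matrix (Fin 3) (Fin 3) R) = !![a, d, e; c, b, f; 0, 0, a * b + c * d]) ∧
      Nonempty (((MvPolynomial (Fin 2) R ⧸ squaresIdeal R) ≃ₐ[R]
        (MvPolynomial (Fin 2) R ⧸ squaresIdeal R)) ≃* G) :=
  ⟨autRep.range, mem_range_autRep_iff h2,
    ⟨(quotientEquiv R).autCongr.trans (MonoidHom.ofInjective autRep_injective)⟩⟩

/-- For a field `k` of characteristic `≠ 2`, the set of `3×3` matrices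
`[[a,d,e],[c,b,f],[0,0,ab+cd]]` with `ad = 0`, `cb = 0` and `a²b² ≠ c²d²` is a subgroup
of `GL₃(k)`, and the group of `k`-algebra automorphisms of `k[u,v]/(u², v²)` is
isomorphic to it. -/
theorem aut_kuv_quot_iso_subgroup (k : Type) [Field k] (hchar : ringChar k ≠ 2) :
    ∃ G : Subgroup (Matrix.GeneralLinearGroup (Fin 3) k),
      (∀ M : Matrix.GeneralLinearGroup (Fin 3) k, M ∈ G ↔ ∃ a b c d e f : k,
        a * d = 0 ∧ c * b = 0 ∧ a ^ 2 * b ^ 2 ≠ c ^ 2 * d ^ 2 ∧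
        (M : Matrix (Fin 3) (Fin 3) k) = !![a, d, e; c, b, f; 0, 0, a * b + c * d]) ∧
      Nonempty (((MvPolynomial (Fin 2) k ⧸
          Ideal.span {(MvPolynomial.X 0 : MvPolynomial (Fin 2) k) ^ 2,
            (MvPolynomial.X 1 : MvPolynomial (Fin 2) k) ^ 2}) ≃ₐ[k]
        (MvPolynomial (Fin 2) k ⧸
          Ideal.span {(MvPolynomial.X 0 : MvPolynomial (Fin 2) k) ^ 2,
            (MvPolynomial.X 1 : MvPolynomial (Fin 2) k) ^ 2})) ≃* G) := by
  simpa only [isUnit_iff_ne_zero, sub_ne_zero] using aut_kuv_quot_iso_subgroup_general k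
    (mem_nonZeroDivisors_of_ne_zero (Ring.two_ne_zero hchar))
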